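/- Let d_R, d_f, d_P, d_B be positive integers with d_R·d_f = d_P·d_B, and let H_b = H_R = ℂ^{d_R}, H_f = ℂ^{d_f}, H_P = ℂ^{d_P}, H_B = ℂ^{d_B}. Fix unit vectors ψ_f ∈ H_f and e_P ∈ H_P, a unit vector ψ ∈ H_b ⊗ H_R, and a unitary W_b on H_b. For a unitary U : H_b ⊗ H_f → H_P ⊗ H_B define the linear map Ṽ_U : H_b → H_B by Ṽ_U(v) = √(d_P) · (⟨e_P| ⊗ I_B) U (v ⊗ ψ_f). Then, with μ the Haar probability measure on the unitary group of dimension d_P·d_B: ∫ ‖ Tr_B[ (Ṽ_U ⊗ I_R)(W_b ⊗ I_R) ψψ† (W_b† ⊗ I_R)(Ṽ_U† ⊗ I_R) ] − Tr_B[ (Ṽ_U ⊗ I_R) ψψ† (Ṽ_U† ⊗ I_R) ] ‖₂² dμ(U) ≤ 4/d_B. -/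

import Mathlib

open scoped BigOperators Kronecker
open MeasureTheory

/-- The rank-one operator `|v⟩⟨v|` of a vector. -/
noncomputable def outer {n : Type*} (v : n → ℂ) : Matrix n n ℂ :=
  fun i j => v i * (starRingEnd ℂ) (v j)

/-- Partial trace over the first (left) tensor factor:
`(Tr_B ρ)_{i,j} = ∑ₖ ρ_{(k,i),(k,j)}`. -/
noncomputable def ptraceLeft {a b : Type*} [Fintype a]
    (ρ : Matrix (a × b) (a × b) ℂ) : Matrix b b ℂ :=
  fun i j => ∑ k, ρ (k, i) (k, j)

/-- Squared Frobenius (Schatten-2) norm `‖M‖₂² = Tr(M†M) = ∑ |M_{ij}|²`. -/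
noncomputable def frobSq {n : Type*} [Fintype n] (M : Matrix n n ℂ) : ℝ :=
  ∑ i, ∑ j, ‖M i j‖ ^ 2

/-- The post-measurement encoding map `Ṽ_U : H_b → H_B`,
`Ṽ_U(v) = √(d_P) (⟨e_P| ⊗ I_B) U (v ⊗ ψ_f)`, written as a `d_B × d_R` matrix;
`e : Fin dR × Fin df ≃ Fin dP × Fin dB` identifies `H_b ⊗ H_f` with `H_P ⊗ H_B`. -/
noncomputable def Vtilde (dR df dP dB : ℕ)
    (e : Fin dR × Fin df ≃ Fin dP × Fin dB)
    (ψf : Fin df → ℂ) (eP : Fin dP → ℂ)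
    (U : Matrix (Fin dP × Fin dB) (Fin dP × Fin dB) ℂ) :
    Matrix (Fin dB) (Fin dR) ℂ :=
  fun k r => (Real.sqrt dP : ℂ) * ∑ p, (starRingEnd ℂ) (eP p) *
    ∑ y : Fin dP × Fin dB,
      U (p, k) y * (if (e.symm y).1 = r then ψf (e.symm y).2 else 0)

theorem isCompact_unitaryGroup (n : Type*) [Fintype n] [DecidableEq n] :
    IsCompact (Matrix.unitaryGroup n ℂ : Set (Matrix n n ℂ)) := by
  have hK : IsCompact (Set.univ.pi fun _ => Set.univ.pi fun _ => Metric.closedBall 0 1 :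
      Set (n → n → ℂ)) :=
    isCompact_univ_pi fun _ => isCompact_univ_pi fun _ => isCompact_closedBall 0 1
  refine IsCompact.of_isClosed_subset hK (isClosed_unitary (R := Matrix n n ℂ)) ?_
  intro U hU i _ j _
  simpa using entry_norm_bound_of_unitary hU i j

instance unitaryGroup_compactSpace (n : Type*) [Fintype n] [DecidableEq n] :
    CompactSpace (Matrix.unitaryGroup n ℂ) :=
  isCompact_iff_compactSpace.mp (isCompact_unitaryGroup n)

theorem isMulRightInvariant_of_compact_haar {G : Type*} [Group G] [TopologicalSpace G]
    [IsTopologicalGroup G] [CompactSpace G] [MeasurableSpace G] [BorelSpace G]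
    (μ : Measure G) [μ.IsHaarMeasure] [IsProbabilityMeasure μ] : μ.IsMulRightInvariant where
  map_mul_right_eq_self g := by
    have : IsProbabilityMeasure (Measure.map (· * g) μ) :=
      Measure.isProbabilityMeasure_map (measurable_mul_const g).aemeasurable
    exact Measure.isHaarMeasure_eq_of_isProbabilityMeasure _ _

theorem exists_unitary_column {n : Type*} [Fintype n] [DecidableEq n] (x : n → ℂ)
    (hx : ∑ i, ‖x i‖ ^ 2 = 1) (j : n) :
    ∃ Z : Matrix.unitaryGroup n ℂ, ∀ i, (Z : Matrix n n ℂ) i j = x i := by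
  have hv : Orthonormal ℂ (Set.domRestrict {j} (fun _ : n => WithLp.toLp 2 x)) := by
    refine ⟨fun i => ?_, fun a b hab => (hab (Subsingleton.elim _ _)).elim⟩
    simp [EuclideanSpace.norm_eq, Set.domRestrict, hx]
  obtain ⟨b, hb⟩ := hv.exists_orthonormalBasis_extension_of_card_eq (by simp)
  refine ⟨⟨_, (EuclideanSpace.basisFun n ℂ).toMatrix_orthonormalBasis_mem_unitary b⟩, fun i => ?_⟩
  simp [Module.Basis.toMatrix_apply, hb j rfl]

section moments
variable {n : Type*} [Fintype n] [DecidableEq n]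

theorem unitaryGroup_sum_row_norm_sq (U : Matrix.unitaryGroup n ℂ) (k : n) :
    ∑ i, ‖(U : Matrix n n ℂ) k i‖ ^ 2 = 1 := by
  have h := congrFun (congrFun (Matrix.mem_unitaryGroup_iff.mp U.2) k) k
  simp only [Matrix.mul_apply, Matrix.star_apply, Matrix.one_apply_eq, RCLike.star_def,
    Complex.mul_conj'] at h
  exact_mod_cast h

theorem four_phase_identity (z w : ℂ) :
    ‖z + w‖ ^ 4 + ‖z - w‖ ^ 4 + ‖z + Complex.I * w‖ ^ 4 + ‖z - Complex.I * w‖ ^ 4 =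
      4 * ‖z‖ ^ 4 + 4 * ‖w‖ ^ 4 + 16 * (‖z‖ ^ 2 * ‖w‖ ^ 2) := by
  have h (u : ℂ) : ‖u‖ ^ 4 = (u.re * u.re + u.im * u.im) ^ 2 := by
    rw [← Complex.normSq_apply, Complex.normSq_eq_norm_sq]; ring
  rw [h, h, h, h, h, h, ← Complex.normSq_eq_norm_sq, ← Complex.normSq_eq_norm_sq,
    Complex.normSq_apply, Complex.normSq_apply]
  simp
  ring

@[fun_prop]
theorem continuous_unitaryGroup_entry (k i : n) :
    Continuous fun U : Matrix.unitaryGroup n ℂ => (U : Matrix n n ℂ) k i :=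
  (continuous_apply_apply k i).comp continuous_subtype_val

theorem integrable_of_continuous_unitaryGroup [MeasurableSpace (Matrix.unitaryGroup n ℂ)]
    [BorelSpace (Matrix.unitaryGroup n ℂ)] (μ : Measure (Matrix.unitaryGroup n ℂ))
    [IsFiniteMeasure μ] {f : Matrix.unitaryGroup n ℂ → ℝ} (hf : Continuous f) : Integrable f μ :=
  hf.integrable_of_hasCompactSupport (HasCompactSupport.of_compactSpace f)

theorem Matrix.IsHermitian.exists_unitary_diagonal {τ : Matrix n n ℂ} (hτ : τ.IsHermitian) :
    ∃ (Z : Matrix.unitaryGroup n ℂ) (D : n → ℝ), τ =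
      (Z : Matrix n n ℂ) * Matrix.diagonal (fun i => (D i : ℂ)) * (Z : Matrix n n ℂ).conjTranspose :=
  ⟨hτ.eigenvectorUnitary, hτ.eigenvalues, hτ.spectral_theorem⟩

theorem mul_diagonal_mul_conjTranspose_diag (V : Matrix n n ℂ) (D : n → ℝ) (k : n) :
    (V * Matrix.diagonal (fun i => (D i : ℂ)) * V.conjTranspose) k k =
      ((∑ i, D i * ‖V k i‖ ^ 2 : ℝ) : ℂ) := by
  rw [Matrix.mul_apply]
  push_cast
  refine Finset.sum_congr rfl fun i _ => ?_
  rw [Matrix.mul_diagonal, Matrix.conjTranspose_apply, RCLike.star_def, ← Complex.mul_conj']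
  ring

theorem trace_unitary_conj (Z : Matrix.unitaryGroup n ℂ) (M : Matrix n n ℂ) :
    ((Z : Matrix n n ℂ) * M * (Z : Matrix n n ℂ).conjTranspose).trace = M.trace := by
  rw [Matrix.trace_mul_cycle, ← Matrix.star_eq_conjTranspose,
    Matrix.mem_unitaryGroup_iff'.mp Z.2, one_mul]

theorem unitary_conj_mul_unitary_conj (Z : Matrix.unitaryGroup n ℂ) (M M' : Matrix n n ℂ) :
    ((Z : Matrix n n ℂ) * M * (Z : Matrix n n ℂ).conjTranspose) *
      ((Z : Matrix n n ℂ) * M' * (Z : Matrix n n ℂ).conjTranspose) =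
      (Z : Matrix n n ℂ) * (M * M') * (Z : Matrix n n ℂ).conjTranspose := by
  have h : (Z : Matrix n n ℂ).conjTranspose * (Z : Matrix n n ℂ) = 1 :=
    Matrix.mem_unitaryGroup_iff'.mp Z.2
  calc _ = (Z : Matrix n n ℂ) * M * ((Z : Matrix n n ℂ).conjTranspose * (Z : Matrix n n ℂ)) * M' *
        (Z : Matrix n n ℂ).conjTranspose := by simp only [Matrix.mul_assoc]
    _ = _ := by rw [h]; simp only [Matrix.mul_assoc, Matrix.one_mul]

/-- The twirl `U τ U†` of a matrix by a unitary. -/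
noncomputable def unitaryConj (τ : Matrix n n ℂ) (U : Matrix.unitaryGroup n ℂ) : Matrix n n ℂ :=
  (U : Matrix n n ℂ) * τ * (U : Matrix n n ℂ).conjTranspose

theorem unitaryConj_mul (τ : Matrix n n ℂ) (U Z : Matrix.unitaryGroup n ℂ) :
    unitaryConj τ (U * Z) =
      unitaryConj ((Z : Matrix n n ℂ) * τ * (Z : Matrix n n ℂ).conjTranspose) U := by
  simp [unitaryConj, Matrix.conjTranspose_mul, Matrix.mul_assoc]

@[fun_prop]
theorem continuous_unitaryConj_entry (τ : Matrix n n ℂ) (k l : n) :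
    Continuous fun U : Matrix.unitaryGroup n ℂ => unitaryConj τ U k l := by
  simp only [unitaryConj, Matrix.mul_apply, Matrix.conjTranspose_apply]
  fun_prop

theorem isHermitian_unitaryConj {τ : Matrix n n ℂ} (hτ : τ.IsHermitian)
    (U : Matrix.unitaryGroup n ℂ) : (unitaryConj τ U).IsHermitian :=
  Matrix.isHermitian_mul_mul_conjTranspose _ hτ

theorem sum_norm_sq_unitaryConj_row {τ : Matrix n n ℂ} (hτ : τ.IsHermitian)
    (U : Matrix.unitaryGroup n ℂ) (k : n) :
    ∑ l, ‖unitaryConj τ U k l‖ ^ 2 = (unitaryConj (τ * τ) U k k).re := by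
  have h : unitaryConj (τ * τ) U = unitaryConj τ U * (unitaryConj τ U).conjTranspose := by
    rw [(isHermitian_unitaryConj hτ U).eq]
    exact (unitary_conj_mul_unitary_conj U τ τ).symm
  rw [h, Matrix.mul_apply, Complex.re_sum]
  refine Finset.sum_congr rfl fun l _ => ?_
  rw [Matrix.conjTranspose_apply, RCLike.star_def, Complex.mul_conj']
  norm_cast

theorem permMatrix_mem_unitaryGroup (σ : Equiv.Perm n) :
    σ.permMatrix ℂ ∈ Matrix.unitaryGroup n ℂ := by
  rw [Matrix.mem_unitaryGroup_iff, Matrix.star_eq_conjTranspose, Matrix.conjTranspose_permMatrix,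
    ← Matrix.permMatrix_mul]
  simp

variable [MeasurableSpace (Matrix.unitaryGroup n ℂ)] [BorelSpace (Matrix.unitaryGroup n ℂ)]
  (μ : Measure (Matrix.unitaryGroup n ℂ)) [μ.IsHaarMeasure]

theorem integral_unitaryConj_perm (τ : Matrix n n ℂ) (σ : Equiv.Perm n) (k l : n) :
    ∫ U, ‖unitaryConj τ U (σ k) (σ l)‖ ^ 2 ∂μ = ∫ U, ‖unitaryConj τ U k l‖ ^ 2 ∂μ := by
  rw [← integral_mul_left_eq_self (fun U => ‖unitaryConj τ U k l‖ ^ 2)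
    ⟨_, permMatrix_mem_unitaryGroup σ⟩]
  congr 1 with U
  have : unitaryConj τ (⟨_, permMatrix_mem_unitaryGroup σ⟩ * U) =
      (unitaryConj τ U).submatrix σ σ := by
    have h : unitaryConj τ (⟨_, permMatrix_mem_unitaryGroup σ⟩ * U) =
        σ.permMatrix ℂ * unitaryConj τ U * (σ.permMatrix ℂ).conjTranspose := by
      simp only [unitaryConj, Submonoid.coe_mul, Matrix.conjTranspose_mul, Matrix.mul_assoc]
    rw [h, Matrix.conjTranspose_permMatrix, Equiv.Perm.permMatrix, Equiv.Perm.permMatrix,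
      PEquiv.toMatrix_toPEquiv_mul, PEquiv.mul_toMatrix_toPEquiv]
    rfl
  rw [this, Matrix.submatrix_apply]

variable [IsProbabilityMeasure μ]

theorem integral_row_combination (x : n → ℂ) (hx : ∑ i, ‖x i‖ ^ 2 = 1) (k j : n) (m : ℕ) :
    ∫ U : Matrix.unitaryGroup n ℂ, ‖∑ i, (U : Matrix n n ℂ) k i * x i‖ ^ m ∂μ =
      ∫ U : Matrix.unitaryGroup n ℂ, ‖(U : Matrix n n ℂ) k j‖ ^ m ∂μ := by
  have := isMulRightInvariant_of_compact_haar μ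
  obtain ⟨Z, hZ⟩ := exists_unitary_column x hx j
  rw [← integral_mul_right_eq_self (fun U : Matrix.unitaryGroup n ℂ =>
    ‖(U : Matrix n n ℂ) k j‖ ^ m) Z]
  simp [Matrix.mul_apply, hZ]

theorem integral_row_norm_pow_eq (k i j : n) (m : ℕ) :
    ∫ U : Matrix.unitaryGroup n ℂ, ‖(U : Matrix n n ℂ) k i‖ ^ m ∂μ =
      ∫ U : Matrix.unitaryGroup n ℂ, ‖(U : Matrix n n ℂ) k j‖ ^ m ∂μ := by
  have hx : ∑ l, ‖(Pi.single i 1 : n → ℂ) l‖ ^ 2 = 1 := by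
    simp [Pi.single_apply, apply_ite]
  simpa [Pi.single_apply] using integral_row_combination μ (Pi.single i 1) hx k j m

theorem integral_norm_sq_entry (k i : n) :
    ∫ U : Matrix.unitaryGroup n ℂ, ‖(U : Matrix n n ℂ) k i‖ ^ 2 ∂μ = 1 / Fintype.card n := by
  have h : ∑ j, ∫ U : Matrix.unitaryGroup n ℂ, ‖(U : Matrix n n ℂ) k j‖ ^ 2 ∂μ = 1 := by
    rw [← integral_finsetSum _ fun j _ => integrable_of_continuous_unitaryGroup μ (by fun_prop)]
    simp [unitaryGroup_sum_row_norm_sq]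
  simp_rw [fun j => integral_row_norm_pow_eq μ k j i 2] at h
  have : Nonempty n := ⟨k⟩
  simp at h
  field_simp
  linarith

theorem integral_norm_pow_four_entry (k : n) {i j : n} (hij : i ≠ j) :
    ∫ U : Matrix.unitaryGroup n ℂ, ‖(U : Matrix n n ℂ) k i‖ ^ 4 ∂μ =
      2 * ∫ U : Matrix.unitaryGroup n ℂ,
        ‖(U : Matrix n n ℂ) k i‖ ^ 2 * ‖(U : Matrix n n ℂ) k j‖ ^ 2 ∂μ := by
  have key (w : ℂ) (hw : ‖w‖ = 1) :
      ∫ U : Matrix.unitaryGroup n ℂ,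
        ‖(U : Matrix n n ℂ) k i + w * (U : Matrix n n ℂ) k j‖ ^ 4 ∂μ =
      4 * ∫ U : Matrix.unitaryGroup n ℂ, ‖(U : Matrix n n ℂ) k i‖ ^ 4 ∂μ := by
    set x : n → ℂ := fun l => ((√2 : ℝ) : ℂ)⁻¹ * ((if l = i then 1 else 0) + if l = j then w else 0)
      with hxdef
    have hx : ∑ l, ‖x l‖ ^ 2 = 1 := by
      have : ∀ l, ‖x l‖ ^ 2 = (if l = i then 1 / 2 else 0) + if l = j then 1 / 2 else 0 := by
        intro l
        by_cases h1 : l = i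
        · subst h1; simp [hxdef, hij]
        · by_cases h3 : l = j <;> simp [hxdef, h1, h3, hw, Ne.symm hij]
      simp [this, Finset.sum_add_distrib]
      norm_num
    rw [← integral_row_combination μ x hx k i 4, ← integral_const_mul]
    congr 1 with U
    have : ∑ l, (U : Matrix n n ℂ) k l * x l =
        ((√2 : ℝ) : ℂ)⁻¹ * ((U : Matrix n n ℂ) k i + w * (U : Matrix n n ℂ) k j) := by
      simp only [hxdef, mul_add, Finset.sum_add_distrib, mul_ite, mul_one, mul_zero,
        Finset.sum_ite_eq', Finset.mem_univ, if_true]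
      ring
    rw [this, norm_mul, mul_pow]
    have h4 : (√2 : ℝ) ^ 4 = 4 := by
      rw [show (√2 : ℝ) ^ 4 = (√2 ^ 2) ^ 2 by ring, Real.sq_sqrt (by norm_num)]; norm_num
    rw [norm_inv, Complex.norm_real, Real.norm_of_nonneg (Real.sqrt_nonneg 2), inv_pow, h4]
    ring
  have hsum : ∫ U : Matrix.unitaryGroup n ℂ,
      (‖(U : Matrix n n ℂ) k i + 1 * (U : Matrix n n ℂ) k j‖ ^ 4
        + ‖(U : Matrix n n ℂ) k i + (-1) * (U : Matrix n n ℂ) k j‖ ^ 4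
        + ‖(U : Matrix n n ℂ) k i + Complex.I * (U : Matrix n n ℂ) k j‖ ^ 4
        + ‖(U : Matrix n n ℂ) k i + (-Complex.I) * (U : Matrix n n ℂ) k j‖ ^ 4) ∂μ =
      ∫ U : Matrix.unitaryGroup n ℂ, (4 * ‖(U : Matrix n n ℂ) k i‖ ^ 4
        + 4 * ‖(U : Matrix n n ℂ) k j‖ ^ 4
        + 16 * (‖(U : Matrix n n ℂ) k i‖ ^ 2 * ‖(U : Matrix n n ℂ) k j‖ ^ 2)) ∂μ := by
    congr 1 with U
    rw [← four_phase_identity]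
    simp [sub_eq_add_neg]
  have hI {f : Matrix.unitaryGroup n ℂ → ℝ} (hf : Continuous f) : Integrable f μ :=
    integrable_of_continuous_unitaryGroup μ hf
  rw [integral_add (hI (by fun_prop)) (hI (by fun_prop)),
    integral_add (hI (by fun_prop)) (hI (by fun_prop)),
    integral_add (hI (by fun_prop)) (hI (by fun_prop)),
    integral_add (hI (by fun_prop)) (hI (by fun_prop)),
    integral_add (hI (by fun_prop)) (hI (by fun_prop)),
    key _ (by simp), key _ (by simp), key _ (by simp), key _ (by simp),
    integral_const_mul, integral_const_mul, integral_const_mul,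
    integral_row_norm_pow_eq μ k j i 4] at hsum
  linarith

theorem integral_norm_sq_mul_norm_sq_entry (k i j : n) :
    ∫ U : Matrix.unitaryGroup n ℂ,
        ‖(U : Matrix n n ℂ) k i‖ ^ 2 * ‖(U : Matrix n n ℂ) k j‖ ^ 2 ∂μ =
      (1 + if i = j then 1 else 0) / (Fintype.card n * (Fintype.card n + 1)) := by
  set a := ∫ U : Matrix.unitaryGroup n ℂ, ‖(U : Matrix n n ℂ) k i‖ ^ 4 ∂μ with ha
  have hval (l : n) : ∫ U : Matrix.unitaryGroup n ℂ,
      ‖(U : Matrix n n ℂ) k i‖ ^ 2 * ‖(U : Matrix n n ℂ) k l‖ ^ 2 ∂μ =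
        a / 2 + if i = l then a / 2 else 0 := by
    by_cases h : i = l
    · subst h
      simp only [if_true, add_halves, ha]
      congr 1 with U
      ring
    · rw [if_neg h, ha, integral_norm_pow_four_entry μ k h]
      ring
  have hsum : ∑ l, ∫ U : Matrix.unitaryGroup n ℂ,
      ‖(U : Matrix n n ℂ) k i‖ ^ 2 * ‖(U : Matrix n n ℂ) k l‖ ^ 2 ∂μ = 1 / Fintype.card n := by
    rw [← integral_finsetSum _ fun j _ => integrable_of_continuous_unitaryGroup μ (by fun_prop)]
    simp_rw [← Finset.mul_sum, unitaryGroup_sum_row_norm_sq, mul_one]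
    exact integral_norm_sq_entry μ k i
  have hN : (0 : ℝ) < Fintype.card n := by
    have : Nonempty n := ⟨k⟩
    exact_mod_cast Fintype.card_pos
  simp_rw [hval] at hsum ⊢
  simp only [Finset.sum_add_distrib, Finset.sum_const, Finset.card_univ, nsmul_eq_mul,
    Finset.sum_ite_eq, Finset.mem_univ, if_true] at hsum
  have ha2 : a / 2 = 1 / (Fintype.card n * (Fintype.card n + 1)) := by
    field_simp at hsum ⊢
    linarith
  rw [ha2]
  split_ifs <;> ring

theorem integral_sum_mul_norm_sq_entry (D : n → ℝ) (k : n) :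
    ∫ U : Matrix.unitaryGroup n ℂ, ∑ i, D i * ‖(U : Matrix n n ℂ) k i‖ ^ 2 ∂μ =
      (∑ i, D i) / Fintype.card n := by
  rw [integral_finsetSum _ fun j _ => integrable_of_continuous_unitaryGroup μ (by fun_prop)]
  simp_rw [integral_const_mul, integral_norm_sq_entry, ← Finset.sum_mul]
  ring

theorem integral_sum_mul_norm_sq_entry_sq (D : n → ℝ) (k : n) :
    ∫ U : Matrix.unitaryGroup n ℂ, (∑ i, D i * ‖(U : Matrix n n ℂ) k i‖ ^ 2) ^ 2 ∂μ =
      ((∑ i, D i) ^ 2 + ∑ i, D i ^ 2) / (Fintype.card n * (Fintype.card n + 1)) := by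
  have h (U : Matrix.unitaryGroup n ℂ) : (∑ i, D i * ‖(U : Matrix n n ℂ) k i‖ ^ 2) ^ 2 =
      ∑ i, ∑ j, D i * D j *
        (‖(U : Matrix n n ℂ) k i‖ ^ 2 * ‖(U : Matrix n n ℂ) k j‖ ^ 2) := by
    rw [sq, Finset.sum_mul_sum]
    exact Finset.sum_congr rfl fun i _ => Finset.sum_congr rfl fun j _ => by ring
  simp_rw [h]
  rw [integral_finsetSum _ fun i _ => integrable_of_continuous_unitaryGroup μ (by fun_prop)]
  simp_rw [fun i => integral_finsetSum (μ := μ) Finset.univ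
    (f := fun j (U : Matrix.unitaryGroup n ℂ) => D i * D j *
        (‖(U : Matrix n n ℂ) k i‖ ^ 2 * ‖(U : Matrix n n ℂ) k j‖ ^ 2))
    fun j _ => integrable_of_continuous_unitaryGroup μ (by fun_prop)]
  simp_rw [integral_const_mul, integral_norm_sq_mul_norm_sq_entry, ← mul_div_assoc,
    ← Finset.sum_div, mul_add, mul_ite, mul_one, mul_zero, Finset.sum_add_distrib,
    Finset.sum_ite_eq, Finset.mem_univ, if_true]
  rw [sq (∑ i, D i), Finset.sum_mul_sum]
  simp_rw [sq]

theorem integral_unitaryConj_diag {τ : Matrix n n ℂ} (hτ : τ.IsHermitian) (k : n) :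
    ∫ U, (unitaryConj τ U k k).re ∂μ = τ.trace.re / Fintype.card n := by
  have := isMulRightInvariant_of_compact_haar μ
  obtain ⟨Z, D, rfl⟩ := hτ.exists_unitary_diagonal
  simp_rw [← unitaryConj_mul]
  rw [integral_mul_right_eq_self fun U =>
    (unitaryConj (Matrix.diagonal fun i => (D i : ℂ)) U k k).re]
  simp_rw [unitaryConj, mul_diagonal_mul_conjTranspose_diag, Complex.ofReal_re]
  rw [integral_sum_mul_norm_sq_entry, trace_unitary_conj, Matrix.trace_diagonal]
  simp

theorem integral_unitaryConj_diag_sq {τ : Matrix n n ℂ} (hτ : τ.IsHermitian) (k : n) :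
    ∫ U, ‖unitaryConj τ U k k‖ ^ 2 ∂μ =
      (τ.trace.re ^ 2 + (τ * τ).trace.re) / (Fintype.card n * (Fintype.card n + 1)) := by
  have := isMulRightInvariant_of_compact_haar μ
  obtain ⟨Z, D, rfl⟩ := hτ.exists_unitary_diagonal
  simp_rw [← unitaryConj_mul]
  rw [integral_mul_right_eq_self fun U =>
    ‖unitaryConj (Matrix.diagonal fun i => (D i : ℂ)) U k k‖ ^ 2]
  simp_rw [unitaryConj, mul_diagonal_mul_conjTranspose_diag, Complex.norm_real, Real.norm_eq_abs,
    sq_abs]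
  rw [integral_sum_mul_norm_sq_entry_sq, unitary_conj_mul_unitary_conj, trace_unitary_conj,
    trace_unitary_conj, Matrix.diagonal_mul_diagonal, Matrix.trace_diagonal, Matrix.trace_diagonal]
  simp [sq]

theorem integral_unitaryConj_offDiag {τ : Matrix n n ℂ} (hτ : τ.IsHermitian) {k l : n}
    (hkl : k ≠ l) :
    ∫ U, ‖unitaryConj τ U k k‖ ^ 2 ∂μ +
        (Fintype.card n - 1) * ∫ U, ‖unitaryConj τ U k l‖ ^ 2 ∂μ =
      (τ * τ).trace.re / Fintype.card n := by
  have hττ : (τ * τ).IsHermitian := by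
    rw [Matrix.IsHermitian, Matrix.conjTranspose_mul, hτ.eq]
  rw [← integral_unitaryConj_diag μ hττ k]
  simp_rw [← sum_norm_sq_unitaryConj_row hτ]
  rw [integral_finsetSum _ fun j _ => integrable_of_continuous_unitaryGroup μ (by fun_prop),
    ← Finset.add_sum_erase _ _ (Finset.mem_univ k)]
  have h : ∀ m ∈ Finset.univ.erase k, ∫ U, ‖unitaryConj τ U k m‖ ^ 2 ∂μ =
      ∫ U, ‖unitaryConj τ U k l‖ ^ 2 ∂μ := by
    intro m hm
    rw [← integral_unitaryConj_perm μ τ (Equiv.swap l m) k l, Equiv.swap_apply_left,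
      Equiv.swap_apply_of_ne_of_ne hkl (Finset.ne_of_mem_erase hm).symm]
  rw [Finset.sum_congr rfl h, Finset.sum_const, Finset.card_erase_of_mem (Finset.mem_univ k),
    nsmul_eq_mul, Finset.card_univ, Nat.cast_sub (Fintype.card_pos_iff.mpr ⟨k⟩), Nat.cast_one]

/-- The weighted sum of the rank-one operators of the rows of `Y`. -/
noncomputable def weightedRowSum {n m : Type*} [Fintype n] (w : n → ℝ) (Y : Matrix n m ℂ) :
    Matrix m m ℂ :=
  fun i j => ∑ k, (w k : ℂ) * (Y k i * (starRingEnd ℂ) (Y k j))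

/-- For weights `w` summing to zero, the squared norm of the weighted sum of the rank-one operators
of the rows of `U B` has a small Haar average. -/
theorem integral_frobSq_weighted_rows_le {m : Type*} [Fintype m] (B : Matrix n m ℂ)
    (hB : ∑ i, ∑ j, ‖B i j‖ ^ 2 = 1) (w : n → ℝ) (hw : ∑ k, w k = 0) :
    ∫ U : Matrix.unitaryGroup n ℂ, frobSq (weightedRowSum w ((U : Matrix n n ℂ) * B)) ∂μ ≤
      (∑ k, w k ^ 2) / ((Fintype.card n : ℝ) ^ 2 - 1) := by
  set τ : Matrix n n ℂ := B * B.conjTranspose with hτdef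
  have hτ : τ.IsHermitian := Matrix.isHermitian_mul_conjTranspose_self B
  have htr : τ.trace.re = 1 := by
    rw [← hB, Matrix.trace, Complex.re_sum]
    refine Finset.sum_congr rfl fun i _ => ?_
    rw [Matrix.diag_apply, hτdef, Matrix.mul_apply, Complex.re_sum]
    refine Finset.sum_congr rfl fun j _ => ?_
    rw [Matrix.conjTranspose_apply, RCLike.star_def, Complex.mul_conj']
    norm_cast
  have htr2 : 0 ≤ (τ * τ).trace.re := by
    have h := sum_norm_sq_unitaryConj_row hτ 1
    simp only [unitaryConj, OneMemClass.coe_one, Matrix.conjTranspose_one, Matrix.mul_one,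
      Matrix.one_mul] at h
    rw [Matrix.trace, Complex.re_sum]
    refine Finset.sum_nonneg fun k _ => ?_
    rw [Matrix.diag_apply, ← h k]
    positivity
  have hpt (U : Matrix.unitaryGroup n ℂ) : frobSq (weightedRowSum w ((U : Matrix n n ℂ) * B)) =
      ∑ k, ∑ l, w k * w l * ‖unitaryConj τ U k l‖ ^ 2 := by
    set Y := (U : Matrix n n ℂ) * B with hY
    have hT : unitaryConj τ U = Y * Y.conjTranspose := by
      simp [unitaryConj, hτdef, hY, Matrix.conjTranspose_mul, Matrix.mul_assoc]
    rw [hT]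
    simp only [frobSq, weightedRowSum]
    apply Complex.ofReal_injective
    push_cast
    simp_rw [← Complex.mul_conj', map_sum, map_mul, Complex.conj_conj, Complex.conj_ofReal,
      Matrix.mul_apply, Matrix.conjTranspose_apply, RCLike.star_def, map_sum, map_mul,
      Complex.conj_conj, Finset.sum_mul_sum, Finset.mul_sum]
    rw [Finset.sum_congr rfl fun i _ => Finset.sum_comm, Finset.sum_comm]
    refine Finset.sum_congr rfl fun k _ => ?_
    rw [Finset.sum_congr rfl fun i _ => Finset.sum_comm, Finset.sum_comm]
    refine Finset.sum_congr rfl fun l _ => ?_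
    refine Finset.sum_congr rfl fun i _ => Finset.sum_congr rfl fun j _ => ?_
    ring
  simp_rw [hpt]
  rw [integral_finsetSum _ fun i _ => integrable_of_continuous_unitaryGroup μ (by fun_prop)]
  simp_rw [fun k => integral_finsetSum (μ := μ) Finset.univ
    (f := fun l (U : Matrix.unitaryGroup n ℂ) => w k * w l * ‖unitaryConj τ U k l‖ ^ 2)
    fun j _ => integrable_of_continuous_unitaryGroup μ (by fun_prop), integral_const_mul]
  rcases subsingleton_or_nontrivial n with hn | hn
  · have hw0 : w = 0 := by
      ext k
      rwa [Fintype.sum_subsingleton _ k] at hw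
    simp [hw0]
  have hN : (1 : ℝ) < Fintype.card n := by exact_mod_cast Fintype.one_lt_card
  set N : ℝ := (Fintype.card n : ℝ)
  set t := (τ * τ).trace.re with ht
  set E₀ := (1 + t) / (N * (N + 1)) with hE₀
  set E₁ := (t / N - E₀) / (N - 1) with hE₁
  have hN1 : N - 1 ≠ 0 := by linarith
  have hX (k l : n) : ∫ U, ‖unitaryConj τ U k l‖ ^ 2 ∂μ =
      E₁ + if k = l then E₀ - E₁ else 0 := by
    have hdiag : ∫ U, ‖unitaryConj τ U k k‖ ^ 2 ∂μ = E₀ := by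
      rw [integral_unitaryConj_diag_sq μ hτ, htr, one_pow]
    by_cases h : k = l
    · subst h
      rw [hdiag, if_pos rfl]
      ring
    · have := integral_unitaryConj_offDiag μ hτ h
      rw [hdiag] at this
      rw [if_neg h, add_zero, hE₁, eq_div_iff hN1]
      linarith
  have hsum : ∑ k, ∑ l, w k * w l * (E₁ + if k = l then E₀ - E₁ else 0) =
      (∑ k, w k ^ 2) * (E₀ - E₁) := by
    simp_rw [mul_add, Finset.sum_add_distrib, mul_ite, mul_zero, Finset.sum_ite_eq,
      Finset.mem_univ, if_true, ← Finset.sum_mul, ← Finset.mul_sum, hw]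
    simp [sq]
  simp_rw [hX]
  rw [hsum, div_eq_mul_inv]
  refine mul_le_mul_of_nonneg_left ?_ (Finset.sum_nonneg fun k _ => sq_nonneg _)
  have hfac : N ^ 2 - 1 = (N - 1) * (N + 1) := by ring
  have hpos : 0 < N - 1 := by linarith
  have hdiff : E₀ - E₁ = (1 - t / N) * (N ^ 2 - 1)⁻¹ := by
    rw [hE₁, hE₀, hfac]
    have : N + 1 ≠ 0 := by linarith
    have : N ≠ 0 := by linarith
    field_simp
    ring
  rw [hdiff]
  refine mul_le_of_le_one_left (by rw [hfac]; positivity) ?_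
  have : 0 ≤ t / N := by positivity
  linarith

end moments

theorem continuous_frobSq {X m : Type*} [TopologicalSpace X] [Fintype m] {f : X → Matrix m m ℂ}
    (hf : ∀ i j, Continuous fun x => f x i j) : Continuous fun x => frobSq (f x) := by
  simp only [frobSq]
  fun_prop

theorem frobSq_sub_le {m : Type*} [Fintype m] (A B : Matrix m m ℂ) :
    frobSq (A - B) ≤ 2 * frobSq A + 2 * frobSq B := by
  simp only [frobSq, Finset.mul_sum, ← Finset.sum_add_distrib]
  refine Finset.sum_le_sum fun i _ => Finset.sum_le_sum fun j _ => ?_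
  rw [Matrix.sub_apply]
  have h := norm_sub_le (A i j) (B i j)
  nlinarith [norm_nonneg (A i j - B i j), sq_nonneg (‖A i j‖ - ‖B i j‖)]

theorem ptraceLeft_outer_kronecker_mulVec {a b c : Type*} [Fintype a] [Fintype b] [Fintype c]
    [DecidableEq c] (V : Matrix a b ℂ) (ψ : b × c → ℂ) (i j : c) :
    ptraceLeft (outer ((V ⊗ₖ (1 : Matrix c c ℂ)).mulVec ψ)) i j =
      ∑ k, (V * Matrix.of fun r s => ψ (r, s)) k i *
        (starRingEnd ℂ) ((V * Matrix.of fun r s => ψ (r, s)) k j) := by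
  have h (k : a) (s : c) : (V ⊗ₖ (1 : Matrix c c ℂ)).mulVec ψ (k, s) =
      (V * Matrix.of fun r s => ψ (r, s)) k s := by
    simp [Matrix.mulVec, dotProduct, Matrix.mul_apply, Fintype.sum_prod_type, Matrix.one_apply]
  simp only [ptraceLeft, outer, h]

theorem conjTranspose_mul_self_apply {a b : Type*} [Fintype a] (Y : Matrix a b ℂ) (i j : b) :
    (Y.conjTranspose * Y) j i = ∑ k, Y k i * (starRingEnd ℂ) (Y k j) := by
  rw [Matrix.mul_apply]
  exact Finset.sum_congr rfl fun k _ => mul_comm _ _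

theorem re_trace_conjTranspose_mul_self {a b : Type*} [Fintype a] [Fintype b]
    (Y : Matrix a b ℂ) : (Y.conjTranspose * Y).trace.re = ∑ k, ∑ i, ‖Y k i‖ ^ 2 := by
  rw [Matrix.trace, Complex.re_sum, Finset.sum_comm]
  refine Finset.sum_congr rfl fun i _ => ?_
  rw [Matrix.diag_apply, conjTranspose_mul_self_apply, Complex.re_sum]
  refine Finset.sum_congr rfl fun k _ => ?_
  rw [Complex.mul_conj']
  norm_cast

theorem unitary_mul_conjTranspose_mul_self {a b : Type*} [Fintype a] [DecidableEq a]
    {V : Matrix a a ℂ} (hV : V ∈ Matrix.unitaryGroup a ℂ) (Y : Matrix a b ℂ) :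
    (V * Y).conjTranspose * (V * Y) = Y.conjTranspose * Y := by
  rw [Matrix.conjTranspose_mul, Matrix.mul_assoc, ← Matrix.mul_assoc V.conjTranspose,
    ← Matrix.star_eq_conjTranspose V, Matrix.mem_unitaryGroup_iff'.mp hV, Matrix.one_mul]

/-- The input state `A` on `H_b ⊗ H_R` tensored with the ancilla state `ψf`, transported along the
identification `e`. -/
noncomputable def ancillaInput {α β n m : Type*} (e : α × β ≃ n) (ψf : β → ℂ)
    (A : Matrix α m ℂ) : Matrix n m ℂ :=
  fun y s => ψf (e.symm y).2 * A (e.symm y).1 s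

theorem ancillaInput_conjTranspose_mul_self {α β n m : Type*} [Fintype α] [Fintype β] [Fintype n]
    (e : α × β ≃ n) (ψf : β → ℂ) (hψf : ∑ i, ‖ψf i‖ ^ 2 = 1) (A : Matrix α m ℂ) :
    (ancillaInput e ψf A).conjTranspose * ancillaInput e ψf A = A.conjTranspose * A := by
  ext j i
  rw [conjTranspose_mul_self_apply, conjTranspose_mul_self_apply, ← e.sum_comp,
    Fintype.sum_prod_type]
  refine Finset.sum_congr rfl fun r _ => ?_
  have h : ∑ f, ψf f * (starRingEnd ℂ) (ψf f) = 1 := by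
    simp_rw [Complex.mul_conj']
    exact_mod_cast hψf
  calc _ = ∑ f, ψf f * (starRingEnd ℂ) (ψf f) * (A r i * (starRingEnd ℂ) (A r j)) := by
        refine Finset.sum_congr rfl fun f _ => ?_
        simp only [ancillaInput, Equiv.symm_apply_apply, map_mul]
        ring
    _ = _ := by rw [← Finset.sum_mul, h, one_mul]

theorem exists_unitary_row {n : Type*} [Fintype n] [DecidableEq n] (x : n → ℂ)
    (hx : ∑ i, ‖x i‖ ^ 2 = 1) (i : n) :
    ∃ Z : Matrix.unitaryGroup n ℂ, ∀ j, (Z : Matrix n n ℂ) i j = (starRingEnd ℂ) (x j) := by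
  obtain ⟨Z, hZ⟩ := exists_unitary_column x hx i
  refine ⟨star Z, fun j => ?_⟩
  rw [Unitary.coe_star, Matrix.star_apply, hZ]
  rfl

theorem Vtilde_mul_apply {dR df dP dB : ℕ} (e : Fin dR × Fin df ≃ Fin dP × Fin dB)
    (ψf : Fin df → ℂ) (eP : Fin dP → ℂ) (U : Matrix (Fin dP × Fin dB) (Fin dP × Fin dB) ℂ)
    {m : Type*} (A : Matrix (Fin dR) m ℂ) {Z : Matrix (Fin dP) (Fin dP) ℂ} {p₀ : Fin dP}
    (hZ : ∀ p, Z p₀ p = (starRingEnd ℂ) (eP p)) (k : Fin dB) (s : m) :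
    (Vtilde dR df dP dB e ψf eP U * A) k s = (Real.sqrt dP : ℂ) *
      (((Z ⊗ₖ (1 : Matrix (Fin dB) (Fin dB) ℂ)) * U) * ancillaInput e ψf A) (p₀, k) s := by
  have hL : (((Z ⊗ₖ (1 : Matrix (Fin dB) (Fin dB) ℂ)) * U) * ancillaInput e ψf A) (p₀, k) s =
      ∑ p, (starRingEnd ℂ) (eP p) * ∑ y, U (p, k) y * ancillaInput e ψf A y s := by
    rw [Matrix.mul_assoc, Matrix.mul_apply, Fintype.sum_prod_type]
    refine Finset.sum_congr rfl fun p _ => ?_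
    simp [Matrix.kroneckerMap_apply, hZ, Matrix.one_apply, Matrix.mul_apply]
  have hA (y : Fin dP × Fin dB) : ancillaInput e ψf A y s =
      ∑ r, (if (e.symm y).1 = r then ψf (e.symm y).2 else 0) * A r s := by
    simp [ancillaInput]
  rw [hL, Matrix.mul_apply]
  simp only [Vtilde, hA, Finset.mul_sum, Finset.sum_mul]
  rw [Finset.sum_comm]
  refine Finset.sum_congr rfl fun p _ => ?_
  rw [Finset.sum_comm]
  refine Finset.sum_congr rfl fun y _ => Finset.sum_congr rfl fun r _ => ?_
  ring

/-- Weights turning the projection onto the rows `(p₀, ·)`, rescaled by `d_P`, into its centred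
version. -/
noncomputable def centredWeight {dP : ℕ} (dB : ℕ) (p₀ : Fin dP) (x : Fin dP × Fin dB) : ℝ :=
  (if x.1 = p₀ then (dP : ℝ) else 0) - 1

theorem sum_centredWeight {dP : ℕ} (dB : ℕ) (p₀ : Fin dP) : ∑ x, centredWeight dB p₀ x = 0 := by
  simp only [centredWeight, Fintype.sum_prod_type_right, Finset.sum_sub_distrib]
  simp

theorem sum_centredWeight_sq {dP : ℕ} (dB : ℕ) (p₀ : Fin dP) :
    ∑ x, centredWeight dB p₀ x ^ 2 = dP * dB * (dP - 1) := by
  have h (x : Fin dP × Fin dB) : centredWeight dB p₀ x ^ 2 =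
      (if x.1 = p₀ then ((dP : ℝ) ^ 2 - 2 * dP) else 0) + 1 := by
    unfold centredWeight
    split_ifs <;> ring
  simp only [h, Fintype.sum_prod_type_right, Finset.sum_add_distrib]
  simp
  ring

theorem sum_centredWeight_sq_div_le {dP dB : ℕ} (hdP : 0 < dP) (hdB : 0 < dB) (p₀ : Fin dP) :
    (∑ x, centredWeight dB p₀ x ^ 2) / ((Fintype.card (Fin dP × Fin dB) : ℝ) ^ 2 - 1) ≤ 1 / dB := by
  rw [sum_centredWeight_sq, Fintype.card_prod, Fintype.card_fin, Fintype.card_fin]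
  push_cast
  have hP : (1 : ℝ) ≤ dP := by exact_mod_cast hdP
  have hB : (1 : ℝ) ≤ dB := by exact_mod_cast hdB
  have hN : 1 ≤ (dP : ℝ) * dB := one_le_mul_of_one_le_of_one_le hP hB
  have hB0 : (0 : ℝ) < dB := by linarith
  rcases hN.eq_or_lt with h | h
  · rw [← h]
    simp
  · rw [div_le_div_iff₀ (by nlinarith) hB0]
    nlinarith

/-- The reduced state on `H_R` minus its Haar average is a centred weighted sum over the rows of a
rotated unitary. -/
theorem ptraceLeft_outer_Vtilde_sub {dR df dP dB : ℕ} (e : Fin dR × Fin df ≃ Fin dP × Fin dB)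
    (ψf : Fin df → ℂ) (hψf : ∑ i, ‖ψf i‖ ^ 2 = 1) (eP : Fin dP → ℂ)
    {U V : Matrix (Fin dP × Fin dB) (Fin dP × Fin dB) ℂ}
    (hV : V ∈ Matrix.unitaryGroup (Fin dP × Fin dB) ℂ) {Z : Matrix (Fin dP) (Fin dP) ℂ}
    (hVZ : V = (Z ⊗ₖ (1 : Matrix (Fin dB) (Fin dB) ℂ)) * U) {p₀ : Fin dP}
    (hZ : ∀ p, Z p₀ p = (starRingEnd ℂ) (eP p))
    {W : Matrix (Fin dR) (Fin dR) ℂ} (hW : W ∈ Matrix.unitaryGroup (Fin dR) ℂ)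
    (ψ : Fin dR × Fin dR → ℂ) :
    ptraceLeft (outer (((Vtilde dR df dP dB e ψf eP U * W) ⊗ₖ
        (1 : Matrix (Fin dR) (Fin dR) ℂ)).mulVec ψ)) -
      ((Matrix.of fun r s => ψ (r, s)).conjTranspose * Matrix.of fun r s => ψ (r, s)).transpose =
    weightedRowSum (centredWeight dB p₀)
      (V * ancillaInput e ψf (W * Matrix.of fun r s => ψ (r, s))) := by
  ext i j
  rw [Matrix.sub_apply, Matrix.transpose_apply, ← unitary_mul_conjTranspose_mul_self hW,
    weightedRowSum]
  rw [ptraceLeft_outer_kronecker_mulVec, Matrix.mul_assoc]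
  set A := W * Matrix.of fun r s => ψ (r, s)
  set Y := V * ancillaInput e ψf A with hY
  have hYY : Y.conjTranspose * Y = A.conjTranspose * A := by
    rw [← ancillaInput_conjTranspose_mul_self e ψf hψf A, hY,
      unitary_mul_conjTranspose_mul_self hV]
  have hVA (k : Fin dB) (s : Fin dR) :
      (Vtilde dR df dP dB e ψf eP U * A) k s = (Real.sqrt dP : ℂ) * Y (p₀, k) s := by
    rw [Vtilde_mul_apply e ψf eP U A hZ, hY, hVZ]
  have hsqrt : (Real.sqrt dP : ℂ) * (Real.sqrt dP : ℂ) = dP := by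
    rw [← Complex.ofReal_mul, Real.mul_self_sqrt (Nat.cast_nonneg _)]
    simp
  rw [← hYY, conjTranspose_mul_self_apply]
  have hw (x : Fin dP × Fin dB) : (centredWeight dB p₀ x : ℂ) =
      (if x.1 = p₀ then (dP : ℂ) else 0) - 1 := by
    unfold centredWeight
    split_ifs <;> simp
  simp_rw [hw, sub_mul, Finset.sum_sub_distrib, one_mul, ite_mul, zero_mul]
  congr 1
  rw [Fintype.sum_prod_type, Finset.sum_comm]
  simp only [Finset.sum_ite_eq', Finset.mem_univ, if_true]
  refine Finset.sum_congr rfl fun k _ => ?_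
  rw [hVA, hVA, map_mul, Complex.conj_ofReal, ← hsqrt]
  ring

/-- **Haar-averaged decoupling bound on the unmeasured boundary (equation (5.19)).**
For a Haar-random unitary `U : H_b ⊗ H_f → H_P ⊗ H_B` followed by a projective
measurement `⟨e_P|` on `H_P`, the average squared Frobenius norm of
`Tr_B[Ṽ_U W_b ψψ† W_b† Ṽ_U†] − Tr_B[Ṽ_U ψψ† Ṽ_U†]` is at most `4/d_B`. -/
theorem haar_decoupling_bound_B
    (dR df dP dB : ℕ) (hdR : 0 < dR) (hdf : 0 < df) (hdP : 0 < dP) (hdB : 0 < dB)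
    (hdim : dR * df = dP * dB)
    (e : Fin dR × Fin df ≃ Fin dP × Fin dB)
    (ψf : Fin df → ℂ) (hψf : ∑ i, ‖ψf i‖ ^ 2 = 1)
    (eP : Fin dP → ℂ) (heP : ∑ i, ‖eP i‖ ^ 2 = 1)
    (ψ : Fin dR × Fin dR → ℂ) (hψ : ∑ i, ‖ψ i‖ ^ 2 = 1)
    (Wb : Matrix (Fin dR) (Fin dR) ℂ) (hWb : Wb ∈ Matrix.unitaryGroup (Fin dR) ℂ)
    [MeasurableSpace (Matrix.unitaryGroup (Fin dP × Fin dB) ℂ)]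
    [BorelSpace (Matrix.unitaryGroup (Fin dP × Fin dB) ℂ)]
    (μ : Measure (Matrix.unitaryGroup (Fin dP × Fin dB) ℂ))
    [μ.IsHaarMeasure] [IsProbabilityMeasure μ] :
    (∫ U : Matrix.unitaryGroup (Fin dP × Fin dB) ℂ,
      frobSq
        (ptraceLeft (outer
            ((((Vtilde dR df dP dB e ψf eP U * Wb) ⊗ₖ (1 : Matrix (Fin dR) (Fin dR) ℂ)).mulVec ψ)))
          - ptraceLeft (outer
            ((((Vtilde dR df dP dB e ψf eP U) ⊗ₖ (1 : Matrix (Fin dR) (Fin dR) ℂ)).mulVec ψ)))) ∂μ)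
      ≤ 4 / dB := by
  let p₀ : Fin dP := ⟨0, hdP⟩
  obtain ⟨Z', hZ'⟩ := exists_unitary_row eP heP p₀
  obtain ⟨Z, hZ⟩ : ∃ Z : Matrix.unitaryGroup (Fin dP × Fin dB) ℂ,
      (Z : Matrix (Fin dP × Fin dB) (Fin dP × Fin dB) ℂ) =
        (Z' : Matrix (Fin dP) (Fin dP) ℂ) ⊗ₖ (1 : Matrix (Fin dB) (Fin dB) ℂ) :=
    ⟨⟨_, Matrix.kronecker_mem_unitary Z'.2 (one_mem (Matrix.unitaryGroup (Fin dB) ℂ))⟩, rfl⟩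
  have hZU (U : Matrix.unitaryGroup (Fin dP × Fin dB) ℂ) :
      ((Z * U : Matrix.unitaryGroup (Fin dP × Fin dB) ℂ) : Matrix _ _ ℂ) =
        ((Z' : Matrix (Fin dP) (Fin dP) ℂ) ⊗ₖ (1 : Matrix (Fin dB) (Fin dB) ℂ)) *
          (U : Matrix (Fin dP × Fin dB) (Fin dP × Fin dB) ℂ) := by
    rw [Submonoid.coe_mul, hZ]
  let Ψ : Matrix (Fin dR) (Fin dR) ℂ := Matrix.of fun r s => ψ (r, s)
  have hΨ : (Ψ.conjTranspose * Ψ).trace.re = 1 := by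
    rw [re_trace_conjTranspose_mul_self, ← hψ, Fintype.sum_prod_type]
    rfl
  let F (W : Matrix (Fin dR) (Fin dR) ℂ) (U : Matrix.unitaryGroup (Fin dP × Fin dB) ℂ) : ℝ :=
    frobSq (weightedRowSum (centredWeight dB p₀)
      ((U : Matrix (Fin dP × Fin dB) (Fin dP × Fin dB) ℂ) * ancillaInput e ψf (W * Ψ)))
  have hFcont (W) : Continuous (F W) := by
    refine continuous_frobSq fun i j => ?_
    simp only [weightedRowSum, Matrix.mul_apply]
    fun_prop
  have hFint {W : Matrix (Fin dR) (Fin dR) ℂ} (hW : W ∈ Matrix.unitaryGroup (Fin dR) ℂ) :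
      ∫ U, F W (Z * U) ∂μ ≤ 1 / dB := by
    rw [integral_mul_left_eq_self (F W)]
    refine (integral_frobSq_weighted_rows_le μ _ ?_ _ (sum_centredWeight dB p₀)).trans
      (sum_centredWeight_sq_div_le hdP hdB p₀)
    rw [← re_trace_conjTranspose_mul_self, ancillaInput_conjTranspose_mul_self e ψf hψf,
      unitary_mul_conjTranspose_mul_self hW,
      hΨ]
  have hFI (W) : Integrable (fun U => F W (Z * U)) μ :=
    integrable_of_continuous_unitaryGroup μ ((hFcont W).comp (continuous_const_mul Z))
  have hone : (1 : Matrix (Fin dR) (Fin dR) ℂ) ∈ Matrix.unitaryGroup (Fin dR) ℂ := one_mem _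
  have hpt (U : Matrix.unitaryGroup (Fin dP × Fin dB) ℂ) :
      frobSq
        (ptraceLeft (outer
            ((((Vtilde dR df dP dB e ψf eP U * Wb) ⊗ₖ (1 : Matrix (Fin dR) (Fin dR) ℂ)).mulVec ψ)))
          - ptraceLeft (outer
            ((((Vtilde dR df dP dB e ψf eP U) ⊗ₖ (1 : Matrix (Fin dR) (Fin dR) ℂ)).mulVec ψ)))) ≤
      2 * F Wb (Z * U) + 2 * F 1 (Z * U) := by
    have h1 := ptraceLeft_outer_Vtilde_sub e ψf hψf eP (Z * U).2 (hZU U) hZ' hWb ψ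
    have h2 := ptraceLeft_outer_Vtilde_sub e ψf hψf eP (Z * U).2 (hZU U) hZ' hone ψ
    rw [Matrix.mul_one] at h2
    rw [← sub_sub_sub_cancel_right _ _ (Ψ.conjTranspose * Ψ).transpose, h1, h2]
    exact frobSq_sub_le _ _
  calc _ ≤ ∫ U, (2 * F Wb (Z * U) + 2 * F 1 (Z * U)) ∂μ := by
        refine integral_mono_of_nonneg (Filter.Eventually.of_forall fun U => ?_)
          (((hFI Wb).const_mul 2).add ((hFI 1).const_mul 2))
          (Filter.Eventually.of_forall fun U => ?_)
        · exact Finset.sum_nonneg fun i _ => Finset.sum_nonneg fun j _ => sq_nonneg _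
        · exact hpt U
    _ = 2 * ∫ U, F Wb (Z * U) ∂μ + 2 * ∫ U, F 1 (Z * U) ∂μ := by
        rw [integral_add ((hFI Wb).const_mul 2) ((hFI 1).const_mul 2), integral_const_mul,
          integral_const_mul]
    _ ≤ 2 * (1 / dB) + 2 * (1 / dB) := by
        gcongr
        exacts [hFint hWb, hFint hone]
    _ = 4 / dB := by ring
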